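/- (Theorem 1, assertion 2, sufficiency) Suppose L(t)·Φ⁺(t) = 0 for all t ∈ ℝ, where L(t) := M'(t) + M(t)Q(t) − Q(t)M(t). Let X : ℝ → M_n(ℝ) be differentiable with X'(t) = P(t)·X(t) for all t and X(0) = E_n, where P(t) := (Φ'(t) + Φ(t)Q(t))·Φ⁺(t). Let y : ℝ → ℝ^m be differentiable with y'(t) = Q(t)·y(t) for all t, and suppose y(t₀) = Φ⁺(t₀)·X(t₀)·c for some t₀ ∈ ℝ and c ∈ ℝ^n. Then y(t) = Φ⁺(t)·X(t)·c for all t ∈ ℝ; in particular y(t) ∈ M^n(t) = {y : M(t)·y = y} for all t ∈ ℝ. -/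

import Mathlib

open Matrix

/-!
Differentiating `M = Φ⁺Φ` and using `ΦΦ⁺ = 1` gives `LΦ⁺ = (Φ⁺)' + Φ⁺P - QΦ⁺`. So `LΦ⁺ = 0` says
that `Φ⁺` intertwines the two linear systems: it carries solutions of `x' = Px` to solutions of
`y' = Qy`. Uniqueness for `y' = Qy` then forces `y = Φ⁺x` as soon as this holds at one time, and
`MΦ⁺ = Φ⁺ΦΦ⁺ = Φ⁺` puts `y` in the range of `M`.
-/

section ProductRule

variable {𝕜 𝔸 l m n : Type*} [NontriviallyNormedField 𝕜] [NormedRing 𝔸] [NormedAlgebra 𝕜 𝔸]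
  [Fintype m] {A : 𝕜 → Matrix l m 𝔸} {A' : Matrix l m 𝔸} {t : 𝕜}

lemma hasDerivAt_mulVec {x : 𝕜 → m → 𝔸} {x' : m → 𝔸}
    (hA : ∀ i j, HasDerivAt (fun s => A s i j) (A' i j) t) (hx : HasDerivAt x x' t) :
    HasDerivAt (fun s => A s *ᵥ x s) (A' *ᵥ x t + A t *ᵥ x') t := by
  refine hasDerivAt_pi.2 fun i => ?_
  simp only [mulVec, dotProduct, Pi.add_apply, ← Finset.sum_add_distrib]
  exact HasDerivAt.fun_sum fun k _ => (hA i k).mul (hasDerivAt_pi.1 hx k)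

lemma hasDerivAt_matrix_mul_apply {B : 𝕜 → Matrix m n 𝔸} {B' : Matrix m n 𝔸}
    (hA : ∀ i j, HasDerivAt (fun s => A s i j) (A' i j) t)
    (hB : ∀ i j, HasDerivAt (fun s => B s i j) (B' i j) t) (i : l) (j : n) :
    HasDerivAt (fun s => (A s * B s) i j) ((A' * B t + A t * B') i j) t := by
  simp only [mul_apply, Matrix.add_apply, ← Finset.sum_add_distrib]
  exact HasDerivAt.fun_sum fun k _ => (hA i k).mul (hB k j)

lemma hasDerivAt_mulVec_of_intertwining [Fintype l] {Q : Matrix l l 𝔸} {P : Matrix m m 𝔸}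
    {x : 𝕜 → m → 𝔸} (hA : ∀ i j, HasDerivAt (fun s => A s i j) (A' i j) t)
    (hx : HasDerivAt x (P *ᵥ x t) t) (hAPQ : A' + A t * P = Q * A t) :
    HasDerivAt (fun s => A s *ᵥ x s) (Q *ᵥ (A t *ᵥ x t)) t := by
  have hAx := hasDerivAt_mulVec hA hx
  rwa [mulVec_mulVec, ← add_mulVec, hAPQ, ← mulVec_mulVec] at hAx

end ProductRule

section LinearODE

variable {𝔸 m n : Type*} [NormedRing 𝔸] [Fintype m] [Fintype n]

attribute [local instance] Matrix.linftyOpNormedAddCommGroup in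
lemma exists_lipschitzWith_mulVec_of_isCompact {T : Type*} [TopologicalSpace T]
    {A : T → Matrix m n 𝔸} {s : Set T} (hs : IsCompact s) (hA : ContinuousOn A s) :
    ∃ K, ∀ t ∈ s, LipschitzWith K (A t *ᵥ ·) := by
  obtain ⟨C, hC⟩ := hs.exists_bound_of_continuousOn hA
  refine ⟨C.toNNReal, fun t ht => LipschitzWith.of_dist_le_mul fun x z => ?_⟩
  calc dist (A t *ᵥ x) (A t *ᵥ z)
      = ‖A t *ᵥ (x - z)‖ := by rw [dist_eq_norm, mulVec_sub]
    _ ≤ ‖A t‖ * ‖x - z‖ := linfty_opNorm_mulVec _ _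
    _ ≤ C.toNNReal * dist x z := by
      rw [dist_eq_norm]
      gcongr
      exact (hC t ht).trans (Real.le_coe_toNNReal C)

lemma eq_of_hasDerivAt_eq_mulVec [NormedAlgebra ℝ 𝔸] {Q : ℝ → Matrix m m 𝔸} (hQ : Continuous Q)
    {y z : ℝ → m → 𝔸} (hy : ∀ t, HasDerivAt y (Q t *ᵥ y t) t)
    (hz : ∀ t, HasDerivAt z (Q t *ᵥ z t) t) {t₀ : ℝ} (h₀ : y t₀ = z t₀) : y = z := by
  ext1 t
  obtain ⟨a, b, ht, ht₀⟩ : ∃ a b, t ∈ Set.Ioo a b ∧ t₀ ∈ Set.Ioo a b :=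
    ⟨min t t₀ - 1, max t t₀ + 1, by grind, by grind⟩
  obtain ⟨K, hK⟩ := exists_lipschitzWith_mulVec_of_isCompact isCompact_Icc
    (hQ.continuousOn (s := Set.Icc a b))
  exact ODE_solution_unique_of_mem_Ioo
    (fun s hs => (hK s (Set.Ioo_subset_Icc_self hs)).lipschitzOnWith (s := Set.univ)) ht₀
    (fun s _ => ⟨hy s, trivial⟩) (fun s _ => ⟨hz s, trivial⟩) h₀ ht

end LinearODE

lemma leibniz_add_commutator_mul_rightInverse {R m n : Type*} [Ring R] [Fintype m] [Fintype n]
    [DecidableEq n] {Φ : Matrix n m R} {Φp : Matrix m n R} (hΦΦp : Φ * Φp = 1)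
    (Φ' : Matrix n m R) (Φp' : Matrix m n R) (Q : Matrix m m R) :
    (Φp' * Φ + Φp * Φ' + Φp * Φ * Q - Q * (Φp * Φ)) * Φp =
      Φp' + Φp * ((Φ' + Φ * Q) * Φp) - Q * Φp := by
  simp only [Matrix.sub_mul, Matrix.add_mul, Matrix.mul_add, Matrix.mul_assoc, hΦΦp,
    Matrix.mul_one, add_assoc]

theorem solution_stays_on_Mn_of_L_Phip_eq_zero_general {𝔸 m n : Type*} [NormedRing 𝔸]
    [NormedAlgebra ℝ 𝔸] [Fintype m] [Fintype n] [DecidableEq n]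
    {Q : ℝ → Matrix m m 𝔸} {Φ Φ' : ℝ → Matrix n m 𝔸} {Φp Φp' : ℝ → Matrix m n 𝔸}
    (hQ : Continuous Q)
    (hΦ : ∀ t i j, HasDerivAt (fun s => Φ s i j) (Φ' t i j) t)
    (hΦp : ∀ t i j, HasDerivAt (fun s => Φp s i j) (Φp' t i j) t)
    (hΦΦp : ∀ t, Φ t * Φp t = 1)
    {M M' : ℝ → Matrix m m 𝔸} (hM : ∀ t, M t = Φp t * Φ t)
    (hM' : ∀ t i j, HasDerivAt (fun s => M s i j) (M' t i j) t)
    (hL : ∀ t, (M' t + M t * Q t - Q t * M t) * Φp t = 0)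
    {P : ℝ → Matrix n n 𝔸} (hP : ∀ t, P t = (Φ' t + Φ t * Q t) * Φp t)
    {x : ℝ → n → 𝔸} (hx : ∀ t, HasDerivAt x (P t *ᵥ x t) t)
    {y : ℝ → m → 𝔸} (hy : ∀ t, HasDerivAt y (Q t *ᵥ y t) t)
    {t₀ : ℝ} (h₀ : y t₀ = Φp t₀ *ᵥ x t₀) :
    (∀ t, y t = Φp t *ᵥ x t) ∧ ∀ t, M t *ᵥ y t = y t := by
  obtain rfl : M = fun t => Φp t * Φ t := funext hM
  have hM'_eq (t : ℝ) : M' t = Φp' t * Φ t + Φp t * Φ' t := by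
    ext i j
    exact (hM' t i j).unique (hasDerivAt_matrix_mul_apply (hΦp t) (hΦ t) i j)
  have intertwining (t : ℝ) : Φp' t + Φp t * P t = Q t * Φp t := by
    rw [← sub_eq_zero, hP, ← leibniz_add_commutator_mul_rightInverse (hΦΦp t), ← hM'_eq, hL]
  have hΦpx (t : ℝ) : HasDerivAt (fun s => Φp s *ᵥ x s) (Q t *ᵥ (Φp t *ᵥ x t)) t :=
    hasDerivAt_mulVec_of_intertwining (hΦp t) (hx t) (intertwining t)
  have y_eq (t : ℝ) : y t = Φp t *ᵥ x t :=
    congrFun (eq_of_hasDerivAt_eq_mulVec hQ hy hΦpx h₀) t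
  refine ⟨y_eq, fun t => ?_⟩
  rw [y_eq, mulVec_mulVec, Matrix.mul_assoc, hΦΦp, Matrix.mul_one]

/-- Theorem 1, assertion 2, sufficiency: if `L(t)Φ⁺(t) = 0` for all `t`, `X` is the
fundamental matrix of `x' = P(t)x` with `P(t) = (Φ'(t) + Φ(t)Q(t))Φ⁺(t)`, and `y` is a
solution of `y' = Q(t)y` with `y(t₀) = Φ⁺(t₀)X(t₀)c`, then `y(t) = Φ⁺(t)X(t)c` for all
`t`; in particular `y(t) ∈ Mⁿ(t)` for all `t`. -/
theorem solution_stays_on_Mn_of_L_Phip_eq_zero (m n : ℕ) (hn : 1 ≤ n) (hnm : n < m)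
    (Q : ℝ → Matrix (Fin m) (Fin m) ℝ)
    (Φ : ℝ → Matrix (Fin n) (Fin m) ℝ) (Φp : ℝ → Matrix (Fin m) (Fin n) ℝ)
    (Φ' : ℝ → Matrix (Fin n) (Fin m) ℝ) (Φp' : ℝ → Matrix (Fin m) (Fin n) ℝ)
    (hQ : ∀ i j, Continuous fun t => Q t i j)
    (hΦ : ∀ t i j, HasDerivAt (fun s => Φ s i j) (Φ' t i j) t)
    (hΦc : ∀ i j, Continuous fun t => Φ' t i j)
    (hΦp : ∀ t i j, HasDerivAt (fun s => Φp s i j) (Φp' t i j) t)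
    (hΦpc : ∀ i j, Continuous fun t => Φp' t i j)
    (hpseudo : ∀ t, Φ t * Φp t = 1)
    (M M' : ℝ → Matrix (Fin m) (Fin m) ℝ)
    (hM : ∀ t, M t = Φp t * Φ t)
    (hM' : ∀ t i j, HasDerivAt (fun s => M s i j) (M' t i j) t)
    (hL : ∀ t, (M' t + M t * Q t - Q t * M t) * Φp t = 0)
    (P : ℝ → Matrix (Fin n) (Fin n) ℝ)
    (hP : ∀ t, P t = (Φ' t + Φ t * Q t) * Φp t)
    (X : ℝ → Matrix (Fin n) (Fin n) ℝ)
    (hX : ∀ t i j, HasDerivAt (fun s => X s i j) ((P t * X t) i j) t)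
    (hX0 : X 0 = 1)
    (y : ℝ → Fin m → ℝ)
    (hy : ∀ t, HasDerivAt y (Q t *ᵥ y t) t)
    (t₀ : ℝ) (c : Fin n → ℝ)
    (hinit : y t₀ = Φp t₀ *ᵥ (X t₀ *ᵥ c)) :
    (∀ t : ℝ, y t = Φp t *ᵥ (X t *ᵥ c)) ∧ (∀ t : ℝ, M t *ᵥ y t = y t) := by
  have hXc (t : ℝ) : HasDerivAt (fun s => X s *ᵥ c) (P t *ᵥ (X t *ᵥ c)) t := by
    simpa using hasDerivAt_mulVec (hX t) (hasDerivAt_const t c)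
  exact solution_stays_on_Mn_of_L_Phip_eq_zero_general (continuous_matrix hQ) hΦ hΦp hpseudo hM hM'
    hL hP hXc hy hinit
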